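/- Let G be an abelian group, Q ⊆ G a saturated submonoid, H ⊆ G a subgroup, and set P = Q ∩ H. Assume that for every q ∈ Q^gp there is an integer n ≥ 1 with n•q ∈ H. Then the map Spec(Q) → Spec(P) sending a face F of Q to the face F ∩ P of P is a bijection, with inverse sending a face F₀ of P to its saturation {q ∈ Q : ∃ n ≥ 1, n•q ∈ F₀} in Q. -/

import Mathlib

/-!
The proof rests on the fact that faces are closed under division by positive integers: if `F` is a
face of `Q`, `q ∈ Q` and `n • q ∈ F` with `n ≥ 1`, then `q ∈ F`, since `q` is a summand of `n • q`
(`IsFace.mem_of_nsmul_mem`). Every `q ∈ Q` has a positive multiple in `Q ∩ H = P`, so a face of `Q`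
is determined by its intersection with `P`. Conversely, the saturation in `Q` of a face `F₀` of `P`
is a face of `Q`: if `n • (p + p') ∈ F₀`, a further multiple brings both summands into `P`, where
the face property of `F₀` applies. It meets `P` in `F₀` by division-closedness of `F₀`.
-/

variable {G : Type*} [AddCommGroup G]

/-- The groupification of a submonoid of an abelian group: the subgroup it generates. -/
def gp (P : AddSubmonoid G) : AddSubgroup G :=
  AddSubgroup.closure (P : Set G)

/-- The saturation of the submonoid `N` inside the subgroup `H`:
`{x ∈ H : ∃ n ≥ 1, n • x ∈ N}`. -/
def satIn (N : AddSubmonoid G) (H : AddSubgroup G) : Set G :=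
  {x | x ∈ H ∧ ∃ n : ℕ, 1 ≤ n ∧ n • x ∈ N}

/-- A submonoid is saturated if it equals its saturation in its groupification. -/
def IsSaturated (Q : AddSubmonoid G) : Prop :=
  (Q : Set G) = satIn Q (gp Q)

/-- A submonoid `V` is valuative if for every `x ∈ V^gp`, either `x ∈ V` or `-x ∈ V`. -/
def IsValuative (V : AddSubmonoid G) : Prop :=
  ∀ x ∈ gp V, x ∈ V ∨ -x ∈ V

/-- A submonoid `V` is divisible if its groupification is a divisible group. -/
def IsDivisible (V : AddSubmonoid G) : Prop :=
  ∀ x ∈ gp V, ∀ n : ℕ, 1 ≤ n → ∃ y ∈ gp V, n • y = x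

/-- A face of the submonoid `Q` is a submonoid `F ⊆ Q` such that whenever a sum of two
elements of `Q` lies in `F`, both summands lie in `F`. -/
def IsFace (Q F : AddSubmonoid G) : Prop :=
  F ≤ Q ∧ ∀ p ∈ Q, ∀ p' ∈ Q, p + p' ∈ F → p ∈ F ∧ p' ∈ F

/-- Faces are closed under division by positive integers. -/
lemma IsFace.mem_of_nsmul_mem {Q F : AddSubmonoid G} (hF : IsFace Q F) {q : G} (hq : q ∈ Q)
    {n : ℕ} (hn : 1 ≤ n) (h : n • q ∈ F) : q ∈ F := by
  obtain ⟨k, rfl⟩ := Nat.exists_eq_add_of_le' hn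
  rw [succ_nsmul] at h
  exact (hF.2 _ (Q.nsmul_mem hq k) _ hq h).2

/-- The saturation `{q ∈ Q : ∃ n ≥ 1, n • q ∈ F₀}` of `F₀` in `Q`, as a submonoid of `G`. -/
def satSubmonoid (Q F₀ : AddSubmonoid G) : AddSubmonoid G where
  carrier := {q : G | q ∈ Q ∧ ∃ n : ℕ, 1 ≤ n ∧ n • q ∈ F₀}
  zero_mem' := ⟨Q.zero_mem, 1, le_rfl, by simp⟩
  add_mem' := by
    rintro a b ⟨ha, m, hm, hma⟩ ⟨hb, n, hn, hnb⟩
    refine ⟨Q.add_mem ha hb, m * n, Nat.mul_pos hm hn, ?_⟩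
    rw [nsmul_add, mul_nsmul, mul_nsmul']
    exact F₀.add_mem (F₀.nsmul_mem hma n) (F₀.nsmul_mem hnb m)

/-- If every element of `Q` has a positive multiple in `P`, then the saturation in `Q` of a face
of `P` is a face of `Q`. -/
lemma IsFace.satSubmonoid {Q P F₀ : AddSubmonoid G} (hF₀ : IsFace P F₀)
    (hmul : ∀ q ∈ Q, ∃ n : ℕ, 1 ≤ n ∧ n • q ∈ P) : IsFace Q (satSubmonoid Q F₀) := by
  refine ⟨fun q hq => hq.1, ?_⟩
  rintro p hp p' hp' ⟨-, n, hn, hsum⟩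
  obtain ⟨a, ha, hap⟩ := hmul p hp
  obtain ⟨b, hb, hbp'⟩ := hmul p' hp'
  -- The common multiplier `n * (a * b)` puts `p` and `p'` in `P` and their sum in `F₀`.
  have hpos : 1 ≤ n * (a * b) := Nat.mul_pos hn (Nat.mul_pos ha hb)
  have hpP : (n * (a * b)) • p ∈ P := by
    rw [mul_left_comm, mul_nsmul]
    exact P.nsmul_mem hap _
  have hpP' : (n * (a * b)) • p' ∈ P := by
    rw [← mul_assoc, mul_nsmul']
    exact P.nsmul_mem hbp' _
  have hmem : (n * (a * b)) • p + (n * (a * b)) • p' ∈ F₀ := by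
    rw [← nsmul_add, mul_nsmul]
    exact F₀.nsmul_mem hsum _
  obtain ⟨h, h'⟩ := hF₀.2 _ hpP _ hpP' hmem
  exact ⟨⟨hp, _, hpos, h⟩, ⟨hp', _, hpos, h'⟩⟩

/-- Let `Q` be a saturated submonoid of an abelian group `G`, `H ⊆ G` a subgroup, and
`P = Q ∩ H`.  Assume every element of `Q^gp` has a positive multiple in `H`.  Then
`F ↦ F ∩ P` is a bijection from faces of `Q` to faces of `P`, with inverse sending a
face `F₀` of `P` to its saturation `{q ∈ Q : ∃ n ≥ 1, n • q ∈ F₀}` in `Q`. -/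
theorem spec_bijection_of_kummer (Q : AddSubmonoid G) (hQ : IsSaturated Q)
    (H : AddSubgroup G) (P : AddSubmonoid G) (hP : P = Q ⊓ H.toAddSubmonoid)
    (htors : ∀ q ∈ gp Q, ∃ n : ℕ, 1 ≤ n ∧ n • q ∈ H) :
    (∀ F : AddSubmonoid G, IsFace Q F → IsFace P (F ⊓ P)) ∧
    (∀ F F' : AddSubmonoid G, IsFace Q F → IsFace Q F' → F ⊓ P = F' ⊓ P → F = F') ∧
    (∀ F₀ : AddSubmonoid G, IsFace P F₀ →
      ∃ F : AddSubmonoid G, IsFace Q F ∧ F ⊓ P = F₀ ∧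
        (F : Set G) = {q : G | q ∈ Q ∧ ∃ n : ℕ, 1 ≤ n ∧ n • q ∈ F₀}) := by
  have hPQ : P ≤ Q := hP ▸ inf_le_left
  have hmul : ∀ q ∈ Q, ∃ n : ℕ, 1 ≤ n ∧ n • q ∈ P := by
    intro q hq
    obtain ⟨n, hn, hnq⟩ := htors q (AddSubgroup.subset_closure hq)
    refine ⟨n, hn, ?_⟩
    rw [hP]
    exact ⟨Q.nsmul_mem hq n, hnq⟩
  have hle : ∀ F F' : AddSubmonoid G, IsFace Q F → IsFace Q F' → F ⊓ P = F' ⊓ P → F ≤ F' := by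
    intro F F' hF hF' h q hq
    obtain ⟨n, hn, hnq⟩ := hmul q (hF.1 hq)
    have hmem : n • q ∈ F' ⊓ P := h ▸ ⟨F.nsmul_mem hq n, hnq⟩
    exact hF'.mem_of_nsmul_mem (hF.1 hq) hn hmem.1
  refine ⟨?_, ?_, ?_⟩
  · intro F hF
    refine ⟨inf_le_right, fun p hp p' hp' h => ?_⟩
    obtain ⟨h₁, h₂⟩ := hF.2 p (hPQ hp) p' (hPQ hp') h.1
    exact ⟨⟨h₁, hp⟩, ⟨h₂, hp'⟩⟩
  · intro F F' hF hF' h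
    exact le_antisymm (hle F F' hF hF' h) (hle F' F hF' hF h.symm)
  · intro F₀ hF₀
    refine ⟨satSubmonoid Q F₀, hF₀.satSubmonoid hmul, le_antisymm ?_ ?_, rfl⟩
    · rintro q ⟨⟨-, n, hn, hnq⟩, hqP⟩
      exact hF₀.mem_of_nsmul_mem hqP hn hnq
    · intro q hq
      exact ⟨⟨hPQ (hF₀.1 hq), 1, le_rfl, by simpa using hq⟩, hF₀.1 hq⟩
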